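/- arXiv:2311.10379 — 2 statements merged into one kernel-verified Lean document; each statement's English description precedes it below -/
import Mathlib

section
/- f(r, C₄) = r^{1/3} + o(r^{1/3}); that is, f(r, C₄)/r^{1/3} tends to 1 as r tends to infinity, where C₄ denotes the cycle on 4 vertices. -/
/-- A complete partition of a graph `G` into `r` parts, encoded as a coloring
`c : V → Fin r` such that between any two distinct color classes there is an edge. -/
def IsCompletePartition {V : Type*} (G : SimpleGraph V) {r : ℕ} (c : V → Fin r) : Prop :=
  ∀ i j : Fin r, i ≠ j → ∃ u v : V, c u = i ∧ c v = j ∧ G.Adj u v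

/-- The cycle on `n` vertices (for `n ≥ 3`). -/
def cycGraph (n : ℕ) : SimpleGraph (ZMod n) :=
  SimpleGraph.fromRel (fun i j => j = i + 1)

/-- `G` contains a subgraph isomorphic to `H`, i.e., there is an injective
graph homomorphism from `H` to `G`. -/
def ContainsCopy {α β : Type*} (H : SimpleGraph α) (G : SimpleGraph β) : Prop :=
  ∃ f : H →g G, Function.Injective f

/-- `f(r, C₄)`: the least `k` such that some `C₄`-free graph admits a complete
partition into `r` parts each of size at most `k`. -/
noncomputable def fC4 (r : ℕ) : ℕ :=
  sInf {k : ℕ | ∃ (n : ℕ) (G : SimpleGraph (Fin n)),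
    ¬ ContainsCopy (cycGraph 4) G ∧
    ∃ c : Fin n → Fin r, IsCompletePartition G c ∧
      ∀ i : Fin r, {v : Fin n | c v = i}.ncard ≤ k}

/-!
*Lower bound.* Two distinct vertices of a `C₄`-free graph on `n` vertices have at most one common
neighbour, so counting paths of length two bounds the degree sum `D` by `D² ≤ n (D + n²)`. A
complete partition into `r` parts of size at most `k` has `n ≤ k r` and `D ≥ r (r - 1)`, whence
`r ≤ (k + 1)³`.

*Upper bound.* Let `p` be a prime with `r ≤ p³`. Index the parts by the triples `(a, b, c)` over
`𝔽_p`; the points of the polarity graph over `𝔽_{p²}` with first coordinate `(a, b)` and second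
coordinate on the line of slope `a` and intercept `c` form parts of size `p`, and any two of these
with distinct `a` are joined by an edge. Triples with the same `a` form `p` families of size `p²`,
to which the construction applies recursively at a cost of `O(p^{2/3})` further vertices per part;
Bertrand's postulate suffices for this recursion.

*Primes.* To choose `p ≤ (1 + o(1)) r^{1/3}`, a prime is needed in `(x, s x)` for every `s > 1` and
large `x`. As in the Wiener–Ikehara theorem, `∑ (Λ n - 1) / n ^ s` extends continuously to
`re s = 1`, so that by the Riemann–Lebesgue lemma the sums of `Λ n / n` and of `1 / n`, smoothed by
a Fejér kernel in `log n` around `T`, have the same behaviour as `T → ∞`. The latter is bounded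
below, whereas the former would be small if there were no primes with logarithm near `T`.
-/

open Filter Topology SimpleGraph

section C4Free

variable {V W K : Type*}

/-- `C4Free G` says that two distinct vertices of `G` have at most one common neighbour, which is
the form in which the absence of 4-cycles is used. -/
def C4Free (G : SimpleGraph V) : Prop :=
  ∀ ⦃a b : V⦄, a ≠ b → (G.commonNeighbors a b).Subsingleton

theorem C4Free.not_containsCopy {G : SimpleGraph V} (hG : C4Free G) :
    ¬ ContainsCopy (cycGraph 4) G := by
  rintro ⟨f, hf⟩
  have hadj (i j : ZMod 4) (hne : i ≠ j) (hij : j = i + 1 ∨ i = j + 1) : G.Adj (f i) (f j) :=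
    f.map_adj ((fromRel_adj _ _ _).2 ⟨hne, hij⟩)
  have h13 : f 1 = f 3 := hG (hf.ne (show (0 : ZMod 4) ≠ 2 by decide))
    ⟨hadj 0 1 (by decide) (by decide), hadj 2 1 (by decide) (by decide)⟩
    ⟨hadj 0 3 (by decide) (by decide), hadj 2 3 (by decide) (by decide)⟩
  exact absurd (hf h13) (by decide)

theorem containsCopy_cycGraph_four {G : SimpleGraph V} {a b x y : V} (hab : a ≠ b) (hxy : x ≠ y)
    (hx : x ∈ G.commonNeighbors a b) (hy : y ∈ G.commonNeighbors a b) :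
    ContainsCopy (cycGraph 4) G := by
  obtain ⟨hax, hbx⟩ := G.mem_commonNeighbors.1 hx
  obtain ⟨hay, hby⟩ := G.mem_commonNeighbors.1 hy
  refine ⟨⟨(![a, x, b, y] : Fin 4 → V), fun {i j} hij ↦ ?_⟩, fun i j hij ↦ ?_⟩
  · have hij' := (fromRel_adj _ i j).1 hij
    change Fin 4 at i j
    change i ≠ j ∧ (j = i + 1 ∨ i = j + 1) at hij'
    clear hij
    fin_cases i <;> fin_cases j <;> first
      | (exfalso; revert hij'; decide)
      | simp [hax, hbx, hay, hby, hax.symm, hbx.symm, hay.symm, hby.symm]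
  · change Fin 4 at i j
    change (![a, x, b, y] : Fin 4 → V) i = (![a, x, b, y] : Fin 4 → V) j at hij
    have := hax.ne
    have := hbx.ne
    have := hay.ne
    have := hby.ne
    fin_cases i <;> fin_cases j <;> first
      | rfl
      | simp_all [eq_comm]

theorem not_containsCopy_cycGraph_four_iff {G : SimpleGraph V} :
    ¬ ContainsCopy (cycGraph 4) G ↔ C4Free G :=
  ⟨fun h _ _ hab _ hx _ hy ↦ not_imp_comm.1 (fun hxy ↦ containsCopy_cycGraph_four hab hxy hx hy) h,
    C4Free.not_containsCopy⟩

namespace C4Free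

theorem comap {G : SimpleGraph W} (hG : C4Free G) {f : V → W} (hf : f.Injective) :
    C4Free (G.comap f) :=
  fun _ _ hab _ hx _ hy ↦ hf (hG (hf.ne hab) hx hy)

theorem sum {G : SimpleGraph V} {G' : SimpleGraph W} (hG : C4Free G) (hG' : C4Free G') :
    C4Free (G ⊕g G') := by
  rintro (a | a) (b | b) hab (x | x) ⟨hax, hbx⟩ (y | y) ⟨hay, hby⟩ <;>
    simp only [mem_neighborSet, SimpleGraph.sum_adj] at hax hbx hay hby
  · exact congrArg _ (hG (by simpa using hab) ⟨hax, hbx⟩ ⟨hay, hby⟩)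
  · exact congrArg _ (hG' (by simpa using hab) ⟨hax, hbx⟩ ⟨hay, hby⟩)

theorem bot_boxProd {G : SimpleGraph W} (hG : C4Free G) :
    C4Free ((⊥ : SimpleGraph V) □ G) := by
  rintro ⟨a, a'⟩ ⟨b, b'⟩ hab ⟨x, x'⟩ ⟨hax, hbx⟩ ⟨y, y'⟩ ⟨hay, hby⟩
  simp only [mem_neighborSet, boxProd_adj, bot_adj, false_and, false_or] at hax hbx hay hby
  obtain ⟨hax, rfl⟩ := hax
  obtain ⟨hbx, rfl⟩ := hbx
  obtain ⟨hay, rfl⟩ := hay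
  exact congrArg _ (hG (by simpa using hab) ⟨hax, hbx⟩ ⟨hay, hby.1⟩)

end C4Free

theorem sum_degree_sq_eq_sum_card_commonNeighbors [Fintype V] (G : SimpleGraph V)
    [DecidableRel G.Adj] :
    ∑ v, G.degree v ^ 2 = ∑ p : V × V, Fintype.card (G.commonNeighbors p.1 p.2) := by
  classical
  have key := Finset.sum_card_bipartiteAbove_eq_sum_card_bipartiteBelow (s := .univ) (t := .univ)
    (r := fun (p : V × V) v ↦ v ∈ G.commonNeighbors p.1 p.2)
  simp_rw [← Set.toFinset_card]
  convert! key.symm using 2 with v _ p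
  · rw [sq, ← card_neighborFinset_eq_degree, ← Finset.card_product]
    congr 1
    ext p
    simp [Finset.bipartiteBelow, mem_commonNeighbors, adj_comm]
  · congr 1
    ext v
    simp [Finset.bipartiteAbove]

theorem C4Free.sum_degree_sq_le [Fintype V] {G : SimpleGraph V} [DecidableRel G.Adj]
    (hG : C4Free G) :
    ∑ v, G.degree v ^ 2 ≤ ∑ v, G.degree v + Fintype.card V ^ 2 := by
  classical
  have hcard (p : V × V) :
      Fintype.card (G.commonNeighbors p.1 p.2) ≤ (if p.1 = p.2 then G.degree p.1 else 0) + 1 := by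
    split_ifs with h
    · exact (G.card_commonNeighbors_le_degree_left p.1 p.2).trans (Nat.le_succ _)
    · rw [zero_add, Fintype.card_le_one_iff_subsingleton]
      exact (hG h).coe_sort
  calc ∑ v, G.degree v ^ 2
      = ∑ p : V × V, Fintype.card (G.commonNeighbors p.1 p.2) :=
        sum_degree_sq_eq_sum_card_commonNeighbors G
    _ ≤ ∑ p : V × V, ((if p.1 = p.2 then G.degree p.1 else 0) + 1) :=
        Finset.sum_le_sum fun p _ ↦ hcard p
    _ = ∑ v, G.degree v + Fintype.card V ^ 2 := by
        simp [Finset.sum_add_distrib, Fintype.sum_prod_type, sq]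

theorem C4Free.sq_sum_degree_le [Fintype V] {G : SimpleGraph V} [DecidableRel G.Adj]
    (hG : C4Free G) :
    (∑ v, G.degree v) ^ 2 ≤ Fintype.card V * (∑ v, G.degree v + Fintype.card V ^ 2) :=
  sq_sum_le_card_mul_sum_sq.trans (Nat.mul_le_mul_left _ hG.sum_degree_sq_le)

/-- The affine part of the polarity graph of the projective plane over `K`: the points `(x, y)` and
`(x', y')` are adjacent when `y + y' = x * x'`. -/
def polarityGraph (K : Type*) [CommRing K] : SimpleGraph (K × K) where
  Adj u v := u ≠ v ∧ u.2 + v.2 = u.1 * v.1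
  symm := ⟨fun u v h ↦ ⟨h.1.symm, by rw [add_comm, h.2, mul_comm]⟩⟩
  loopless := ⟨fun _ h ↦ h.1 rfl⟩

theorem c4Free_polarityGraph [CommRing K] [IsDomain K] : C4Free (polarityGraph K) := by
  rintro a b hab x ⟨⟨-, hax⟩, -, hbx⟩ y ⟨⟨-, hay⟩, -, hby⟩
  have hprod : (a.1 - b.1) * (x.1 - y.1) = 0 := by linear_combination hay - hax + hbx - hby
  rcases mul_eq_zero.1 hprod with h | h <;> have h := sub_eq_zero.1 h
  · exact absurd (Prod.ext h (by rw [h] at hax; linear_combination hax - hbx)) hab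
  · exact Prod.ext h (by rw [h] at hax; linear_combination hax - hay)

end C4Free

section Cover

variable {ι κ : Type*} {k k' : ℕ} {H H' : SimpleGraph ι}

/-- `HasC4FreeCover H k` says that some finite `C₄`-free graph can be partitioned into parts of size
at most `k`, indexed by the vertices of `H`, such that parts adjacent in `H` are joined by an edge.
For complete `H` this is a complete partition; general `H` allows building one piece by piece. -/
def HasC4FreeCover (H : SimpleGraph ι) (k : ℕ) : Prop :=
  ∃ (V : Type) (_ : Finite V) (G : SimpleGraph V) (c : V → ι), C4Free G ∧
    (∀ ⦃i j⦄, H.Adj i j → ∃ u v, c u = i ∧ c v = j ∧ G.Adj u v) ∧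
    ∀ i, {v | c v = i}.ncard ≤ k

theorem ncard_setOf_fst_eq (i : ι) : {v : ι × κ | v.1 = i}.ncard = Nat.card κ := by
  have hfiber : {v : ι × κ | v.1 = i} = Set.range (Prod.mk i) := by
    ext ⟨j, t⟩
    simp [eq_comm]
  rw [hfiber, ← Set.image_univ, Set.ncard_image_of_injective _ (Prod.mk_right_injective i),
    Set.ncard_univ]

namespace HasC4FreeCover

theorem mono (h : HasC4FreeCover H k) (hH : H' ≤ H) (hk : k ≤ k') : HasC4FreeCover H' k' := by
  obtain ⟨V, hV, G, c, hG, hadj, hcard⟩ := h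
  exact ⟨V, hV, G, c, hG, fun i j hij ↦ hadj (hH hij), fun i ↦ (hcard i).trans hk⟩

theorem sup (h : HasC4FreeCover H k) (h' : HasC4FreeCover H' k') :
    HasC4FreeCover (H ⊔ H') (k + k') := by
  obtain ⟨V, hV, G, c, hG, hadj, hcard⟩ := h
  obtain ⟨V', hV', G', c', hG', hadj', hcard'⟩ := h'
  refine ⟨V ⊕ V', inferInstance, G ⊕g G', Sum.elim c c', hG.sum hG', ?_, fun i ↦ ?_⟩
  · rintro i j (hij | hij)
    · obtain ⟨u, v, hu, hv, huv⟩ := hadj hij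
      exact ⟨.inl u, .inl v, hu, hv, huv⟩
    · obtain ⟨u, v, hu, hv, huv⟩ := hadj' hij
      exact ⟨.inr u, .inr v, hu, hv, huv⟩
  · have hfiber : {v | Sum.elim c c' v = i} =
        Sum.inl '' {v | c v = i} ∪ Sum.inr '' {v | c' v = i} := by
      ext (v | v) <;> simp
    calc {v | Sum.elim c c' v = i}.ncard
        ≤ (Sum.inl '' {v | c v = i} : Set (V ⊕ V')).ncard
          + (Sum.inr '' {v | c' v = i} : Set (V ⊕ V')).ncard :=
          hfiber ▸ Set.ncard_union_le _ _
      _ = {v | c v = i}.ncard + {v | c' v = i}.ncard := by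
          rw [Set.ncard_image_of_injective _ Sum.inl_injective,
            Set.ncard_image_of_injective _ Sum.inr_injective]
      _ ≤ k + k' := add_le_add (hcard i) (hcard' i)

theorem bot_boxProd (β : Type) [Finite β] (h : HasC4FreeCover H k) :
    HasC4FreeCover ((⊥ : SimpleGraph β) □ H) k := by
  obtain ⟨V, hV, G, c, hG, hadj, hcard⟩ := h
  refine ⟨β × V, inferInstance, (⊥ : SimpleGraph β) □ G, Prod.map id c, hG.bot_boxProd, ?_, ?_⟩
  · rintro ⟨a, i⟩ ⟨b, j⟩ hij
    simp only [boxProd_adj, bot_adj, false_and, false_or] at hij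
    obtain ⟨hij, rfl⟩ := hij
    obtain ⟨u, v, rfl, rfl, huv⟩ := hadj hij
    exact ⟨(a, u), (a, v), rfl, rfl, by simpa using huv⟩
  · rintro ⟨a, i⟩
    have hfiber : {v : β × V | Prod.map id c v = (a, i)} = Prod.mk a '' {v | c v = i} := by
      ext ⟨b, v⟩
      simp [and_comm, eq_comm]
    rw [hfiber, Set.ncard_image_of_injective _ (Prod.mk_right_injective a)]
    exact hcard i

theorem comap (h : HasC4FreeCover H k) {f : κ → ι} (hf : f.Injective) :
    HasC4FreeCover (H.comap f) k := by
  obtain ⟨V, hV, G, c, hG, hadj, hcard⟩ := h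
  choose c' hc' using fun v : {v : V // c v ∈ Set.range f} ↦ v.2
  refine ⟨_, inferInstance, G.comap Subtype.val, c', hG.comap Subtype.val_injective,
    fun i j hij ↦ ?_, fun i ↦ ?_⟩
  · obtain ⟨u, v, hu, hv, huv⟩ := hadj hij
    exact ⟨⟨u, i, hu.symm⟩, ⟨v, j, hv.symm⟩, hf ((hc' _).trans hu), hf ((hc' _).trans hv), huv⟩
  · refine le_trans ?_ (hcard (f i))
    refine Set.ncard_le_ncard_of_injOn Subtype.val ?_ Subtype.val_injective.injOn
    rintro v rfl
    exact (hc' v).symm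

theorem top_of_card_le [Finite ι] [Finite κ] (h : HasC4FreeCover (⊤ : SimpleGraph ι) k)
    (hle : Nat.card κ ≤ Nat.card ι) : HasC4FreeCover (⊤ : SimpleGraph κ) k := by
  cases nonempty_fintype ι
  cases nonempty_fintype κ
  rw [Nat.card_eq_fintype_card, Nat.card_eq_fintype_card] at hle
  obtain ⟨f⟩ := Function.Embedding.nonempty_of_card_le hle
  have hcomap : (⊤ : SimpleGraph ι).comap f = ⊤ := SimpleGraph.comap_top f.injective
  exact hcomap ▸ h.comap f.injective

end HasC4FreeCover

theorem hasC4FreeCover_top_card (ι : Type) [Finite ι] :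
    HasC4FreeCover (⊤ : SimpleGraph ι) (Nat.card ι) := by
  let G : SimpleGraph (ι × ι) := fromRel fun u v ↦ v = u.swap
  have hG {u v : ι × ι} (h : G.Adj u v) : v = u.swap := by
    obtain ⟨-, h | h⟩ := (fromRel_adj _ _ _).1 h
    · exact h
    · rw [h, Prod.swap_swap]
  refine ⟨ι × ι, inferInstance, G, Prod.fst, fun a b _ x hx y hy ↦ (hG hx.1).trans (hG hy.1).symm,
    fun i j hij ↦ ⟨(i, j), (j, i), rfl, rfl, (fromRel_adj _ _ _).2 ⟨?_, .inl rfl⟩⟩,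
    fun i ↦ (ncard_setOf_fst_eq i).le⟩
  simpa using fun h ↦ absurd h hij

/-- The point with parameter `t` on the line `(a, b, c)`: its first coordinate is `(a, b)` and its
second coordinate runs through the line of slope `a` and intercept `c` in the plane `F × F`, where
the plane `F × F` is identified with `K`. -/
def linePoint {F K : Type*} [CommRing F] [AddCommMonoid K] (e : K ≃+ F × F)
    (v : (F × F × F) × F) : K × K :=
  (e.symm (v.1.1, v.1.2.1), e.symm (v.2, v.1.1 * v.2 + v.1.2.2))

theorem linePoint_injective {F K : Type*} [CommRing F] [AddCommMonoid K] (e : K ≃+ F × F) :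
    (linePoint e).Injective := by
  rintro ⟨⟨a, b, c⟩, t⟩ ⟨⟨a', b', c'⟩, t'⟩ h
  simp only [linePoint, Prod.mk.injEq, EmbeddingLike.apply_eq_iff_eq] at h
  obtain ⟨⟨rfl, rfl⟩, rfl, hc⟩ := h
  rw [add_left_cancel hc]

theorem exists_polarityGraph_adj_linePoint {F K : Type*} [Field F] [CommRing K] (e : K ≃+ F × F)
    {l m : F × F × F} (hlm : l.1 ≠ m.1) :
    ∃ t t', (polarityGraph K).Adj (linePoint e (l, t)) (linePoint e (m, t')) := by
  obtain ⟨a, b, c⟩ := l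
  obtain ⟨a', b', c'⟩ := m
  obtain ⟨⟨z₁, z₂⟩, hz⟩ : ∃ z, e.symm z = e.symm (a, b) * e.symm (a', b') := e.symm.surjective _
  -- The second coordinates must add up to `(z₁, z₂)`, a linear equation for `t` with
  -- coefficient `a - a'`.
  obtain ⟨t, ht⟩ : ∃ t, t * (a - a') = z₂ - c - c' - a' * z₁ :=
    ⟨_, div_mul_cancel₀ _ (sub_ne_zero.2 hlm)⟩
  refine ⟨t, z₁ - t, (linePoint_injective e).ne fun h ↦ hlm (congrArg (fun v ↦ v.1.1) h), ?_⟩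
  simp only [linePoint]
  rw [← hz, ← map_add]
  congr 1
  ext
  · simp
  · simp only [Prod.mk_add_mk]
    linear_combination ht

variable (F : Type) [Field F] [Finite F]

theorem exists_field_addEquiv_prod : ∃ (K : Type) (_ : Field K), Nonempty (K ≃+ F × F) := by
  obtain ⟨p, _⟩ := CharP.exists F
  have : Fact p.Prime := ⟨CharP.char_is_prime F p⟩
  have hrank : Module.finrank F (FiniteField.Extension F p 2) = Module.finrank F (F × F) := by
    rw [FiniteField.finrank_extension, Module.finrank_prod, Module.finrank_self]
  exact ⟨_, inferInstance, ⟨(LinearEquiv.ofFinrankEq _ _ hrank).toAddEquiv⟩⟩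

theorem hasC4FreeCover_comap_fst :
    HasC4FreeCover ((⊤ : SimpleGraph F).comap (Prod.fst : F × F × F → F)) (Nat.card F) := by
  obtain ⟨K, _, ⟨e⟩⟩ := exists_field_addEquiv_prod F
  refine ⟨(F × F × F) × F, inferInstance, (polarityGraph K).comap (linePoint e), Prod.fst,
    c4Free_polarityGraph.comap (linePoint_injective e), fun l m hlm ↦ ?_,
    fun l ↦ (ncard_setOf_fst_eq l).le⟩
  obtain ⟨t, t', hadj⟩ := exists_polarityGraph_adj_linePoint e hlm
  exact ⟨(l, t), (m, t'), rfl, rfl, hadj⟩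

variable {F}

theorem HasC4FreeCover.top_prod (h : HasC4FreeCover (⊤ : SimpleGraph (F × F)) k) :
    HasC4FreeCover (⊤ : SimpleGraph (F × F × F)) (Nat.card F + k) := by
  refine ((hasC4FreeCover_comap_fst F).sup (h.bot_boxProd F)).mono ?_ le_rfl
  rintro ⟨a, i⟩ ⟨b, j⟩ hij
  by_cases hab : a = b
  · subst hab
    exact .inr (by simpa using hij)
  · exact .inl hab

theorem HasC4FreeCover.top_fin_of_prime {p r : ℕ} (hp : p.Prime) (hr : r ≤ p ^ 3)
    (h : HasC4FreeCover (⊤ : SimpleGraph (Fin (p ^ 2))) k) :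
    HasC4FreeCover (⊤ : SimpleGraph (Fin r)) (p + k) := by
  have : Fact p.Prime := ⟨hp⟩
  have hplane : HasC4FreeCover (⊤ : SimpleGraph (ZMod p × ZMod p)) k :=
    h.top_of_card_le (by simp [sq])
  have hspace := hplane.top_prod
  rw [Nat.card_zmod] at hspace
  refine hspace.top_of_card_le ?_
  simpa [pow_succ, mul_assoc] using hr

theorem hasC4FreeCover_top_fin (t : ℕ) {r : ℕ} (hr : r ≤ t ^ 3) :
    HasC4FreeCover (⊤ : SimpleGraph (Fin r)) (1024 * t) := by
  induction t using Nat.strong_induction_on generalizing r with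
  | _ t ih =>
    rcases lt_or_ge t 32 with ht | ht
    · refine (hasC4FreeCover_top_card (Fin r)).mono le_rfl ?_
      calc Nat.card (Fin r) ≤ t ^ 3 := by simpa using hr
        _ = t ^ 2 * t := by ring
        _ ≤ 32 ^ 2 * t := by gcongr
        _ = 1024 * t := by norm_num
    · obtain ⟨p, hp, htp, hpt⟩ := Nat.exists_prime_lt_and_le_two_mul t (by omega)
      obtain ⟨q, hq⟩ : ∃ q, q = (t + 1) / 2 := ⟨_, rfl⟩
      have hpq : p ^ 2 ≤ q ^ 3 :=
        calc p ^ 2 ≤ (4 * q) ^ 2 := by gcongr; omega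
          _ = 16 * q ^ 2 := by ring
          _ ≤ q * q ^ 2 := by gcongr; omega
          _ = q ^ 3 := by ring
      have hrp : r ≤ p ^ 3 := hr.trans (by gcongr)
      exact ((ih q (by omega) hpq).top_fin_of_prime hp hrp).mono le_rfl (by omega)

theorem hasC4FreeCover_top_fin_iff {r : ℕ} :
    HasC4FreeCover (⊤ : SimpleGraph (Fin r)) k ↔ ∃ (n : ℕ) (G : SimpleGraph (Fin n)),
      ¬ ContainsCopy (cycGraph 4) G ∧ ∃ c : Fin n → Fin r, IsCompletePartition G c ∧
        ∀ i : Fin r, {v : Fin n | c v = i}.ncard ≤ k := by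
  constructor
  · rintro ⟨V, hV, G, c, hG, hadj, hcard⟩
    let e := Finite.equivFin V
    refine ⟨Nat.card V, G.comap e.symm, (hG.comap e.symm.injective).not_containsCopy, c ∘ e.symm,
      fun i j hij ↦ ?_, fun i ↦ ?_⟩
    · obtain ⟨u, v, hu, hv, huv⟩ := hadj hij
      exact ⟨e u, e v, by simpa using hu, by simpa using hv, by simpa using huv⟩
    · exact (Set.ncard_le_ncard_of_injOn e.symm (fun _ hv ↦ hv) e.symm.injective.injOn).trans
        (hcard i)
  · rintro ⟨n, G, hG, c, hadj, hcard⟩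
    exact ⟨Fin n, inferInstance, G, c, not_containsCopy_cycGraph_four_iff.1 hG,
      fun i j hij ↦ hadj i j hij, hcard⟩

theorem fC4_eq_sInf (r : ℕ) : fC4 r = sInf {k | HasC4FreeCover (⊤ : SimpleGraph (Fin r)) k} := by
  simp only [fC4, hasC4FreeCover_top_fin_iff]

theorem hasC4FreeCover_fC4 (r : ℕ) : HasC4FreeCover (⊤ : SimpleGraph (Fin r)) (fC4 r) := by
  rw [fC4_eq_sInf]
  exact Nat.sInf_mem (s := {k | HasC4FreeCover (⊤ : SimpleGraph (Fin r)) k})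
    ⟨_, hasC4FreeCover_top_card _⟩

theorem fC4_le_of_prime {p r t : ℕ} (hp : p.Prime) (hr : r ≤ p ^ 3) (ht : p ^ 2 ≤ t ^ 3) :
    fC4 r ≤ p + 1024 * t := by
  rw [fC4_eq_sInf]
  exact Nat.sInf_le ((hasC4FreeCover_top_fin t ht).top_fin_of_prime hp hr)

end Cover

section LowerBound

variable {V ι : Type*} [Fintype V] [Fintype ι] {G : SimpleGraph V} {c : V → ι} {k : ℕ}

theorem card_le_mul_of_ncard_fiber_le (hcard : ∀ i, {v | c v = i}.ncard ≤ k) :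
    Fintype.card V ≤ k * Fintype.card ι := by
  classical
  refine Finset.card_le_mul_card_image_of_maps_to (f := c) (fun _ _ ↦ Finset.mem_univ _) k
    fun i _ ↦ ?_
  simpa [Set.ncard_eq_toFinset_card'] using hcard i

theorem card_mul_card_sub_one_le_sum_degree [DecidableRel G.Adj]
    (hadj : ∀ ⦃i j⦄, i ≠ j → ∃ u v, c u = i ∧ c v = j ∧ G.Adj u v) :
    Fintype.card ι * (Fintype.card ι - 1) ≤ ∑ v, G.degree v := by
  classical
  have hsurj : Set.SurjOn (fun d : G.Dart ↦ (c d.fst, c d.snd)) (Finset.univ : Finset G.Dart)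
      ((Finset.univ : Finset ι).offDiag : Finset (ι × ι)) := by
    rintro ⟨i, j⟩ hij
    obtain ⟨u, v, rfl, rfl, huv⟩ := hadj (i := i) (j := j) (by simpa using hij)
    exact ⟨⟨(u, v), huv⟩, by simp, rfl⟩
  calc Fintype.card ι * (Fintype.card ι - 1)
      = (Finset.univ : Finset ι).offDiag.card := by
        rw [Finset.offDiag_card, Finset.card_univ, Nat.mul_sub_one]
    _ ≤ Fintype.card G.Dart := Finset.card_le_card_of_surjOn _ hsurj
    _ = ∑ v, G.degree v := by rw [G.dart_card_eq_sum_degrees]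

theorem le_succ_pow_three_of_sq_le {n D k r : ℕ} (hn : n ≤ k * r) (hD : r * (r - 1) ≤ D)
    (h : D ^ 2 ≤ n * (D + n ^ 2)) : r ≤ (k + 1) ^ 3 := by
  by_contra! hr
  obtain ⟨m, rfl⟩ : ∃ m, r = m + 1 := ⟨r - 1, by lia⟩
  rw [Nat.add_sub_cancel] at hD
  have hkm : k ^ 3 + k + 1 ≤ m := by nlinarith
  have hN : k * (m + 1) ≤ (m + 1) * m := by rw [mul_comm]; gcongr; lia
  zify at *
  have hquad : (D : ℤ) * (D - k * (m + 1)) ≤ (k * (m + 1)) ^ 3 := by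
    have : (n : ℤ) * (D + n ^ 2) ≤ k * (m + 1) * (D + (k * (m + 1)) ^ 2) := by gcongr
    linarith
  have hquad' : ((m : ℤ) + 1) ^ 2 * (m * (m - k)) ≤ (m + 1) ^ 2 * (k ^ 3 * (m + 1)) :=
    calc ((m : ℤ) + 1) ^ 2 * (m * (m - k))
        = (m + 1) * m * ((m + 1) * m - k * (m + 1)) := by ring
      _ ≤ D * (D - k * (m + 1)) := by gcongr
      _ ≤ (k * (m + 1)) ^ 3 := hquad
      _ = (m + 1) ^ 2 * (k ^ 3 * (m + 1)) := by ring
  have hcancel : (m : ℤ) * (m - k) ≤ k ^ 3 * (m + 1) := le_of_mul_le_mul_left hquad' (by positivity)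
  nlinarith

end LowerBound

theorem HasC4FreeCover.card_le {ι : Type*} [Finite ι] {k : ℕ}
    (h : HasC4FreeCover (⊤ : SimpleGraph ι) k) : Nat.card ι ≤ (k + 1) ^ 3 := by
  classical
  obtain ⟨V, _, G, c, hG, hadj, hcard⟩ := h
  cases nonempty_fintype V
  cases nonempty_fintype ι
  rw [Nat.card_eq_fintype_card]
  exact le_succ_pow_three_of_sq_le (card_le_mul_of_ncard_fiber_le hcard)
    (card_mul_card_sub_one_le_sum_degree hadj) hG.sq_sum_degree_le

section FejerKernel

/-- The Fejér kernel of bandwidth `lam`, in the normalization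
`fejerKernel lam u = ∫ t in 0..lam, (1 - t / lam) * cos (t * u)`. -/
noncomputable def fejerKernel (lam u : ℝ) : ℝ := lam / 2 * Real.sinc (lam * u / 2) ^ 2

variable {lam u : ℝ}

theorem fejerKernel_nonneg (hlam : 0 ≤ lam) (u : ℝ) : 0 ≤ fejerKernel lam u := by
  unfold fejerKernel
  positivity

theorem fejerKernel_le_half (hlam : 0 ≤ lam) (u : ℝ) : fejerKernel lam u ≤ lam / 2 :=
  mul_le_of_le_one_right (by positivity) ((sq_le_one_iff_abs_le_one _).2 (Real.abs_sinc_le_one _))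

theorem sinc_mul_self (x : ℝ) : Real.sinc x * x = Real.sin x := by
  rcases eq_or_ne x 0 with rfl | hx
  · simp
  · rw [Real.sinc_of_ne_zero hx, div_mul_cancel₀ _ hx]

theorem two_div_pi_le_abs_sinc {x : ℝ} (hx : |x| ≤ Real.pi / 2) :
    2 / Real.pi ≤ |Real.sinc x| := by
  rcases eq_or_ne x 0 with rfl | hx₀
  · simpa using (div_le_one Real.pi_pos).2 Real.two_le_pi
  · refine le_of_mul_le_mul_right ?_ (abs_pos.2 hx₀)
    rw [← abs_mul, sinc_mul_self]
    exact Real.mul_abs_le_abs_sin hx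

theorem fejerKernel_mul_sq (hlam : lam ≠ 0) (u : ℝ) :
    fejerKernel lam u * u ^ 2 = 2 / lam * Real.sin (lam * u / 2) ^ 2 := by
  rw [fejerKernel, ← sinc_mul_self]
  field_simp

theorem fejerKernel_mul_sq_le (hlam : 0 < lam) (u : ℝ) : fejerKernel lam u * u ^ 2 ≤ 2 / lam := by
  rw [fejerKernel_mul_sq hlam.ne']
  exact mul_le_of_le_one_right (by positivity) (Real.sin_sq_le_one _)

theorem fejerKernel_le_div (hlam : 0 < lam) (u : ℝ) :
    fejerKernel lam u ≤ (lam / 2 + 2 / lam) / (1 + u ^ 2) := by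
  rw [le_div_iff₀ (by positivity)]
  linarith [fejerKernel_le_half hlam.le u, fejerKernel_mul_sq_le hlam u]

theorem fejerKernel_le_div_of_le_abs {δ : ℝ} (hlam : 0 < lam) (hδ : 0 < δ) (hu : δ ≤ |u|) :
    fejerKernel lam u ≤ 2 / lam * (1 + 1 / δ ^ 2) / (1 + u ^ 2) := by
  have hsq : δ ^ 2 ≤ u ^ 2 := by rw [← sq_abs u]; gcongr
  have hnear : fejerKernel lam u ≤ 2 / lam * (1 / δ ^ 2) := by
    rw [mul_one_div, le_div_iff₀ (by positivity)]
    exact (mul_le_mul_of_nonneg_left hsq (fejerKernel_nonneg hlam.le u)).trans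
      (fejerKernel_mul_sq_le hlam u)
  rw [le_div_iff₀ (by positivity)]
  linarith [fejerKernel_mul_sq_le hlam u]

theorem div_eight_le_fejerKernel (hlam : 0 < lam) (hu : |u| ≤ 1 / lam) :
    lam / 8 ≤ fejerKernel lam u := by
  have hx : |lam * u / 2| ≤ Real.pi / 2 := by
    rw [le_div_iff₀' hlam] at hu
    rw [abs_div, abs_mul, abs_of_pos hlam, abs_two]
    linarith [Real.two_le_pi]
  have hsinc : 1 / 2 ≤ |Real.sinc (lam * u / 2)| :=
    ((div_le_div_iff₀ two_pos Real.pi_pos).2 (by linarith [Real.pi_le_four])).trans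
      (two_div_pi_le_abs_sinc hx)
  calc lam / 8 = lam / 2 * (1 / 2) ^ 2 := by ring
    _ ≤ lam / 2 * |Real.sinc (lam * u / 2)| ^ 2 := by gcongr
    _ = fejerKernel lam u := by rw [sq_abs, fejerKernel]

theorem tendsto_fejerKernel_atTop (hlam : 0 < lam) : Tendsto (fejerKernel lam) atTop (𝓝 0) := by
  have hbound : Tendsto (fun u : ℝ ↦ (lam / 2 + 2 / lam) / (1 + u ^ 2)) atTop (𝓝 0) :=
    (tendsto_atTop_add_const_left _ _ (tendsto_pow_atTop two_ne_zero)).const_div_atTop _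
  exact squeeze_zero (fejerKernel_nonneg hlam.le) (fejerKernel_le_div hlam) hbound

theorem integral_one_sub_div_mul_cos (hlam : 0 < lam) (u : ℝ) :
    ∫ t in (0 : ℝ)..lam, (1 - t / lam) * Real.cos (t * u) = fejerKernel lam u := by
  rcases eq_or_ne u 0 with rfl | hu
  · have hint : ∫ t in (0 : ℝ)..lam, t / lam = lam / 2 := by
      rw [intervalIntegral.integral_div, integral_id]
      field_simp
      ring
    simp only [fejerKernel, mul_zero, zero_div, Real.cos_zero, Real.sinc_zero, one_pow, mul_one]
    rw [intervalIntegral.integral_sub intervalIntegrable_const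
      (intervalIntegral.intervalIntegrable_id.div_const lam), hint, integral_one]
    ring
  have hderiv (t : ℝ) : HasDerivAt
      (fun t ↦ (1 - t / lam) * (Real.sin (t * u) / u) - Real.cos (t * u) / (lam * u ^ 2))
      ((1 - t / lam) * Real.cos (t * u)) t := by
    have hmul : HasDerivAt (fun t : ℝ ↦ t * u) u t := hasDerivAt_mul_const u
    have hsub : HasDerivAt (fun t : ℝ ↦ 1 - t / lam) (-(1 / lam)) t :=
      ((hasDerivAt_id t).div_const lam).const_sub 1
    convert! (hsub.mul (hmul.sin.div_const u)).sub (hmul.cos.div_const (lam * u ^ 2)) using 1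
    field_simp
    ring
  rw [intervalIntegral.integral_eq_sub_of_hasDerivAt (fun t _ ↦ hderiv t)
    (Continuous.intervalIntegrable (by fun_prop) _ _)]
  rw [eq_div_of_mul_eq (pow_ne_zero 2 hu) (fejerKernel_mul_sq hlam.ne' u), Real.sin_sq_eq_half_sub,
    mul_div_cancel₀ _ two_ne_zero, div_self hlam.ne']
  simp only [zero_mul, Real.sin_zero, Real.cos_zero]
  field_simp
  ring

end FejerKernel

section ChebyshevBounded

/-- Chebyshev's bound for the sequence `a`: the partial sums of `|a n|` grow at most linearly. -/
def ChebyshevBounded (a : ℕ → ℝ) : Prop :=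
  ∃ C : ℝ, ∀ x : ℝ, 0 ≤ x → ∑ n ∈ Finset.Ioc 0 ⌊x⌋₊, |a n| ≤ C * x

variable {a b : ℕ → ℝ}

theorem ChebyshevBounded.indicator (ha : ChebyshevBounded a) (s : Set ℕ) :
    ChebyshevBounded (s.indicator a) :=
  ha.imp fun _ hC x hx ↦
    (Finset.sum_le_sum fun _ _ ↦ norm_indicator_le_norm_self a _).trans (hC x hx)

theorem ChebyshevBounded.sub (ha : ChebyshevBounded a) (hb : ChebyshevBounded b) :
    ChebyshevBounded (a - b) := by
  obtain ⟨C, hC⟩ := ha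
  obtain ⟨C', hC'⟩ := hb
  refine ⟨C + C', fun x hx ↦ ?_⟩
  rw [add_mul]
  refine le_trans ?_ (add_le_add (hC x hx) (hC' x hx))
  rw [← Finset.sum_add_distrib]
  exact Finset.sum_le_sum fun n _ ↦ abs_sub (a n) (b n)

theorem chebyshevBounded_one : ChebyshevBounded 1 :=
  ⟨1, fun x hx ↦ by simpa using Nat.floor_le hx⟩

theorem chebyshevBounded_vonMangoldt : ChebyshevBounded fun n ↦ ArithmeticFunction.vonMangoldt n :=
  ⟨Real.log 4 + 4, fun x hx ↦ by
    simpa only [abs_of_nonneg ArithmeticFunction.vonMangoldt_nonneg, Chebyshev.psi] using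
      Chebyshev.psi_le_const_mul_self hx⟩

theorem sum_abs_div_le_of_log_mem_Icc {C : ℝ}
    (hC : ∀ x : ℝ, 0 ≤ x → ∑ n ∈ Finset.Ioc 0 ⌊x⌋₊, |a n| ≤ C * x) {y : ℝ} {s : Finset ℕ}
    (hs : ∀ n ∈ s, Real.log n ∈ Set.Icc y (y + 1)) : ∑ n ∈ s, |a n| / n ≤ C * Real.exp 1 := by
  have hpos : ∑ n ∈ s with 0 < n, |a n| / n = ∑ n ∈ s, |a n| / n :=
    Finset.sum_filter_of_ne fun n _ hn ↦ Nat.pos_of_ne_zero (by rintro rfl; simp at hn)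
  have hsub : {n ∈ s | 0 < n} ⊆ Finset.Ioc 0 ⌊Real.exp (y + 1)⌋₊ := by
    intro n hn
    obtain ⟨hns, hn⟩ := Finset.mem_filter.1 hn
    rw [Finset.mem_Ioc, Nat.le_floor_iff (Real.exp_nonneg _)]
    exact ⟨hn, (Real.log_le_iff_le_exp (by positivity)).1 (hs n hns).2⟩
  calc ∑ n ∈ s, |a n| / n
      = ∑ n ∈ s with 0 < n, |a n| / n := hpos.symm
    _ ≤ ∑ n ∈ s with 0 < n, |a n| / Real.exp y := by
        refine Finset.sum_le_sum fun n hn ↦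
          div_le_div_of_nonneg_left (abs_nonneg _) (Real.exp_pos y) ?_
        obtain ⟨hns, hn⟩ := Finset.mem_filter.1 hn
        exact (Real.le_log_iff_exp_le (by positivity)).1 (hs n hns).1
    _ = (∑ n ∈ s with 0 < n, |a n|) / Real.exp y := (Finset.sum_div _ _ _).symm
    _ ≤ C * Real.exp (y + 1) / Real.exp y := by
        gcongr
        exact (Finset.sum_le_sum_of_subset_of_nonneg hsub fun n _ _ ↦ abs_nonneg _).trans
          (hC _ (Real.exp_nonneg _))
    _ = C * Real.exp 1 := by
        rw [Real.exp_add]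
        field_simp

theorem one_div_one_add_sq_le {u v : ℝ} (h : |u - v| ≤ 1) :
    1 / (1 + u ^ 2) ≤ 3 / (1 + v ^ 2) := by
  rw [div_le_div_iff₀ (by positivity) (by positivity)]
  have hsq : (u - v) ^ 2 ≤ 1 := (sq_le_one_iff_abs_le_one _).2 h
  nlinarith [sq_nonneg (2 * u - v)]

theorem summable_int_one_div_one_add_sq : Summable fun k : ℤ ↦ 1 / (1 + (k : ℝ) ^ 2) := by
  refine Summable.of_norm_bounded_eventually (Real.summable_one_div_int_pow.2 one_lt_two) ?_
  filter_upwards [(Set.finite_singleton (0 : ℤ)).compl_mem_cofinite] with k hk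
  have : (k : ℝ) ≠ 0 := by exact_mod_cast hk
  rw [Real.norm_of_nonneg (by positivity)]
  gcongr
  linarith

theorem sum_mul_comp_le_sum_image {α β : Type*} [DecidableEq β] {s : Finset α} {w : α → ℝ}
    {κ : α → β} {g : β → ℝ} {M : ℝ} (hg : 0 ≤ g) (hM : ∀ b, ∑ a ∈ s with κ a = b, w a ≤ M) :
    ∑ a ∈ s, w a * g (κ a) ≤ ∑ b ∈ s.image κ, M * g b := by
  rw [← Finset.sum_fiberwise_of_maps_to fun a ha ↦ Finset.mem_image_of_mem κ ha]
  refine Finset.sum_le_sum fun b _ ↦ ?_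
  calc ∑ a ∈ s with κ a = b, w a * g (κ a)
      = (∑ a ∈ s with κ a = b, w a) * g b := by
        rw [Finset.sum_mul]
        exact Finset.sum_congr rfl fun a ha ↦ by rw [(Finset.mem_filter.1 ha).2]
    _ ≤ M * g b := mul_le_mul_of_nonneg_right (hM b) (hg b)

/-- Splitting the sum according to the integer part of `T - log n`, each piece is bounded by the
linear growth of the partial sums, uniformly in `T`. -/
theorem ChebyshevBounded.exists_sum_div_one_add_sq_le (ha : ChebyshevBounded a) :
    ∃ B, ∀ (T : ℝ) (s : Finset ℕ),
      ∑ n ∈ s, |a n| / n * (1 / (1 + (T - Real.log n) ^ 2)) ≤ B := by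
  obtain ⟨C, hC⟩ := ha
  have hC₀ : 0 ≤ C := by
    simpa using (Finset.sum_nonneg fun n _ ↦ abs_nonneg (a n)).trans (hC 1 zero_le_one)
  have hsum : Summable fun k : ℤ ↦ C * Real.exp 1 * (3 / (1 + (k : ℝ) ^ 2)) := by
    simpa only [mul_one_div] using (summable_int_one_div_one_add_sq.mul_left 3).mul_left _
  refine ⟨∑' k : ℤ, C * Real.exp 1 * (3 / (1 + (k : ℝ) ^ 2)), fun T s ↦ ?_⟩
  let κ (n : ℕ) : ℤ := ⌊T - Real.log n⌋
  have hweight (n : ℕ) : 1 / (1 + (T - Real.log n) ^ 2) ≤ 3 / (1 + (κ n : ℝ) ^ 2) :=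
    one_div_one_add_sq_le (abs_le.2 ⟨by linarith [Int.floor_le (T - Real.log n)],
      by linarith [Int.lt_floor_add_one (T - Real.log n)]⟩)
  have hpiece (k : ℤ) : ∑ n ∈ s with κ n = k, |a n| / n ≤ C * Real.exp 1 := by
    refine sum_abs_div_le_of_log_mem_Icc hC (y := T - k - 1) fun n hn ↦ ?_
    obtain ⟨-, rfl⟩ := Finset.mem_filter.1 hn
    exact ⟨by linarith [Int.lt_floor_add_one (T - Real.log n)],
      by linarith [Int.floor_le (T - Real.log n)]⟩
  calc ∑ n ∈ s, |a n| / n * (1 / (1 + (T - Real.log n) ^ 2))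
      ≤ ∑ n ∈ s, |a n| / n * (3 / (1 + (κ n : ℝ) ^ 2)) :=
        Finset.sum_le_sum fun n _ ↦
          mul_le_mul_of_nonneg_left (hweight n) (div_nonneg (abs_nonneg _) n.cast_nonneg)
    _ ≤ ∑ k ∈ s.image κ, C * Real.exp 1 * (3 / (1 + (k : ℝ) ^ 2)) :=
        sum_mul_comp_le_sum_image (g := fun k : ℤ ↦ 3 / (1 + (k : ℝ) ^ 2))
          (fun k ↦ by positivity) hpiece
    _ ≤ ∑' k : ℤ, C * Real.exp 1 * (3 / (1 + (k : ℝ) ^ 2)) :=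
        hsum.sum_le_tsum _ fun k _ ↦ by positivity

end ChebyshevBounded

section FejerSum

/-- The smoothed sum of `a n / n` over the integers `n` whose logarithm is close to `T`. -/
noncomputable def fejerSum (a : ℕ → ℝ) (lam T : ℝ) : ℝ :=
  ∑' n : ℕ, a n / n * fejerKernel lam (T - Real.log n)

variable {a b : ℕ → ℝ} {lam : ℝ}

theorem ChebyshevBounded.summable_abs_fejerSum (ha : ChebyshevBounded a) (hlam : 0 < lam) (T : ℝ) :
    Summable fun n : ℕ ↦ |a n| / n * fejerKernel lam (T - Real.log n) := by
  obtain ⟨B, hB⟩ := ha.exists_sum_div_one_add_sq_le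
  have hsum : Summable fun n : ℕ ↦ |a n| / n * (1 / (1 + (T - Real.log n) ^ 2)) :=
    summable_of_sum_le (fun n ↦ by positivity) (hB T)
  refine (hsum.mul_left (lam / 2 + 2 / lam)).of_nonneg_of_le
    (fun n ↦ mul_nonneg (by positivity) (fejerKernel_nonneg hlam.le _)) fun n ↦ ?_
  rw [mul_left_comm, mul_one_div]
  gcongr
  exact fejerKernel_le_div hlam _

theorem ChebyshevBounded.summable_fejerSum (ha : ChebyshevBounded a) (hlam : 0 < lam) (T : ℝ) :
    Summable fun n : ℕ ↦ a n / n * fejerKernel lam (T - Real.log n) := by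
  refine (ha.summable_abs_fejerSum hlam T).of_norm_bounded fun n ↦ le_of_eq ?_
  rw [norm_mul, norm_div, Real.norm_eq_abs, Real.norm_natCast,
    Real.norm_of_nonneg (fejerKernel_nonneg hlam.le _)]

theorem ChebyshevBounded.fejerSum_sub (ha : ChebyshevBounded a) (hb : ChebyshevBounded b)
    (hlam : 0 < lam) (T : ℝ) : fejerSum (a - b) lam T = fejerSum a lam T - fejerSum b lam T := by
  rw [fejerSum, fejerSum, fejerSum,
    ← (ha.summable_fejerSum hlam T).tsum_sub (hb.summable_fejerSum hlam T)]
  simp only [Pi.sub_apply, sub_div, sub_mul]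

theorem ChebyshevBounded.exists_fejerSum_le (ha : ChebyshevBounded a) :
    ∃ B, ∀ ⦃lam δ T : ℝ⦄, 0 < lam → 0 < δ → (∀ n, a n ≠ 0 → δ ≤ |T - Real.log n|) →
      fejerSum a lam T ≤ 2 / lam * (1 + 1 / δ ^ 2) * B := by
  obtain ⟨B, hB⟩ := ha.exists_sum_div_one_add_sq_le
  refine ⟨B, fun lam δ T hlam hδ hfar ↦ (ha.summable_fejerSum hlam T).tsum_le_of_sum_le fun s ↦ ?_⟩
  have hterm (n : ℕ) : a n / n * fejerKernel lam (T - Real.log n) ≤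
      2 / lam * (1 + 1 / δ ^ 2) * (|a n| / n * (1 / (1 + (T - Real.log n) ^ 2))) := by
    by_cases hn : a n = 0
    · simp [hn]
    · rw [mul_left_comm, mul_one_div]
      gcongr
      · exact fejerKernel_nonneg hlam.le _
      · exact le_abs_self _
      · exact fejerKernel_le_div_of_le_abs hlam hδ (hfar n hn)
  calc ∑ n ∈ s, a n / n * fejerKernel lam (T - Real.log n)
      ≤ ∑ n ∈ s, 2 / lam * (1 + 1 / δ ^ 2) * (|a n| / n * (1 / (1 + (T - Real.log n) ^ 2))) :=
        Finset.sum_le_sum fun n _ ↦ hterm n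
    _ = 2 / lam * (1 + 1 / δ ^ 2) * ∑ n ∈ s, |a n| / n * (1 / (1 + (T - Real.log n) ^ 2)) :=
        (Finset.mul_sum _ _ _).symm
    _ ≤ 2 / lam * (1 + 1 / δ ^ 2) * B := by
        gcongr
        exact hB T s

theorem tendsto_fejerSum_of_summable (ha : Summable fun n ↦ a n / n) (hlam : 0 < lam) :
    Tendsto (fejerSum a lam) atTop (𝓝 0) := by
  have hterm (n : ℕ) :
      Tendsto (fun T ↦ a n / n * fejerKernel lam (T - Real.log n)) atTop (𝓝 0) := by
    simpa [sub_eq_add_neg] using ((tendsto_fejerKernel_atTop hlam).comp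
      (tendsto_atTop_add_const_right _ (-Real.log n) tendsto_id)).const_mul (a n / n)
  have hdom (T : ℝ) (n : ℕ) :
      ‖a n / n * fejerKernel lam (T - Real.log n)‖ ≤ ‖a n / n‖ * (lam / 2) := by
    rw [norm_mul, Real.norm_of_nonneg (fejerKernel_nonneg hlam.le _)]
    gcongr
    exact fejerKernel_le_half hlam.le _
  have hlim := tendsto_tsum_of_dominated_convergence (ha.norm.mul_right (lam / 2)) hterm
    (.of_forall hdom)
  rwa [tsum_zero] at hlim

theorem half_le_card_Ioc_floor {x h : ℝ} (hx : 0 ≤ x) (hh : 2 ≤ h) :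
    h / 2 ≤ (Finset.Ioc ⌊x⌋₊ ⌊x + h⌋₊).card := by
  rw [Nat.card_Ioc, Nat.cast_sub (Nat.floor_mono (by linarith))]
  linarith [Nat.floor_le hx, Nat.lt_floor_add_one (x + h)]

theorem div_le_fejerKernel_div {n T : ℝ} (hlam : 1 ≤ lam) (hn : Real.exp T ≤ n)
    (hn' : n ≤ Real.exp T + Real.exp T / lam) :
    lam / (16 * Real.exp T) ≤ 1 / n * fejerKernel lam (T - Real.log n) := by
  have hlam₀ : 0 < lam := by linarith
  have hn₀ : 0 < n := (Real.exp_pos T).trans_le hn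
  have hlog : T ≤ Real.log n := (Real.le_log_iff_exp_le hn₀).2 hn
  have hlog' : Real.log n ≤ T + 1 / lam := by
    rw [Real.log_le_iff_le_exp hn₀, Real.exp_add]
    calc n ≤ Real.exp T * (1 / lam + 1) := by linear_combination hn'
      _ ≤ Real.exp T * Real.exp (1 / lam) := by gcongr; exact Real.add_one_le_exp _
  have hle : n ≤ 2 * Real.exp T := by
    linarith [div_le_self (Real.exp_nonneg T) hlam]
  have hkernel : lam / 8 ≤ fejerKernel lam (T - Real.log n) :=
    div_eight_le_fejerKernel hlam₀ (abs_le.2 ⟨by linarith, by linarith [one_div_pos.2 hlam₀]⟩)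
  calc lam / (16 * Real.exp T) = 1 / (2 * Real.exp T) * (lam / 8) := by field_simp; norm_num
    _ ≤ 1 / n * fejerKernel lam (T - Real.log n) := by gcongr

theorem one_div_32_le_fejerSum_one {T : ℝ} (hlam : 1 ≤ lam) (hT : 2 * lam ≤ Real.exp T) :
    1 / 32 ≤ fejerSum 1 lam T := by
  have hlam₀ : 0 < lam := by linarith
  let W := Finset.Ioc ⌊Real.exp T⌋₊ ⌊Real.exp T + Real.exp T / lam⌋₊
  have hcard : Real.exp T / lam / 2 ≤ W.card :=
    half_le_card_Ioc_floor (Real.exp_nonneg T) ((le_div_iff₀ hlam₀).2 hT)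
  have hterm : ∀ n ∈ W, lam / (16 * Real.exp T) ≤ 1 / n * fejerKernel lam (T - Real.log n) := by
    intro n hn
    rw [Finset.mem_Ioc, Nat.floor_lt (Real.exp_nonneg T), Nat.le_floor_iff (by positivity)] at hn
    exact div_le_fejerKernel_div hlam hn.1.le hn.2
  calc 1 / 32 = Real.exp T / lam / 2 * (lam / (16 * Real.exp T)) := by field_simp; norm_num
    _ ≤ W.card * (lam / (16 * Real.exp T)) := by gcongr
    _ ≤ ∑ n ∈ W, 1 / n * fejerKernel lam (T - Real.log n) := by
        rw [← nsmul_eq_mul]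
        exact Finset.card_nsmul_le_sum _ _ _ hterm
    _ ≤ fejerSum 1 lam T :=
        (chebyshevBounded_one.summable_fejerSum hlam₀ T).sum_le_tsum W fun n _ ↦
          mul_nonneg (by simp) (fejerKernel_nonneg hlam₀.le _)

end FejerSum

section FejerTransform

open Complex MeasureTheory

/-- The Fejér mean, with bandwidth `lam` and at the frequency `T`, of the restriction of `G` to the
vertical line of abscissa `σ`. -/
noncomputable def fejerTransform (G : ℂ → ℂ) (lam σ T : ℝ) : ℂ :=
  ∫ t in (0 : ℝ)..lam, (1 - t / lam : ℝ) * (cexp (t * T * I) * G (σ + t * I))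

variable {G : ℂ → ℂ} {a : ℕ → ℝ} {lam σ : ℝ}

theorem tendsto_fejerTransform_nhdsGT_one (hG : ContinuousOn G {s | 1 ≤ s.re}) (lam T : ℝ) :
    Tendsto (fun σ ↦ fejerTransform G lam σ T) (𝓝[>] 1) (𝓝 (fejerTransform G lam 1 T)) := by
  -- Replacing `σ` by `max σ 1` makes the integrand jointly continuous on the whole plane.
  have hmax : Continuous fun p : ℝ × ℝ ↦ G ((max p.1 1 : ℝ) + p.2 * I) :=
    hG.comp_continuous (by fun_prop) fun p ↦ by simp
  have hcont : Continuous fun σ : ℝ ↦ fejerTransform G lam (max σ 1) T := by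
    refine intervalIntegral.continuous_parametric_intervalIntegral_of_continuous' ?_ _ _
    exact Continuous.mul (by fun_prop) (Continuous.mul (by fun_prop) hmax)
  have hlim := (hcont.tendsto 1).mono_left (nhdsWithin_le_nhds (s := Set.Ioi 1))
  rw [max_self] at hlim
  refine hlim.congr' ?_
  filter_upwards [self_mem_nhdsWithin] with σ hσ
  rw [max_eq_left (le_of_lt hσ)]

theorem tendsto_fejerTransform_atTop (G : ℂ → ℂ) (hlam : 0 ≤ lam) (σ : ℝ) :
    Tendsto (fejerTransform G lam σ) atTop (𝓝 0) := by
  have hRL := Real.tendsto_integral_exp_smul_cocompact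
    ((Set.Ioc 0 lam).indicator fun t : ℝ ↦ ((1 - t / lam : ℝ) : ℂ) * G (σ + t * I))
  have hfreq : Tendsto (fun T : ℝ ↦ -T / (2 * Real.pi)) atTop (cocompact ℝ) :=
    (tendsto_neg_atTop_atBot.atBot_div_const (by positivity)).mono_right atBot_le_cocompact
  refine (hRL.comp hfreq).congr fun T ↦ ?_
  rw [fejerTransform, intervalIntegral.integral_of_le hlam, ← integral_indicator measurableSet_Ioc]
  refine integral_congr_ae (.of_forall fun t ↦ ?_)
  by_cases ht : t ∈ Set.Ioc 0 lam
  · have hpi : (Real.pi : ℂ) ≠ 0 := ofReal_ne_zero.2 Real.pi_ne_zero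
    have hexp : ((2 * Real.pi * -(t * (-T / (2 * Real.pi))) : ℝ) : ℂ) * I = t * T * I := by
      push_cast
      field_simp
    simp only [Set.indicator_of_mem ht, Circle.smul_def, Real.fourierChar_apply, smul_eq_mul]
    rw [hexp, mul_left_comm]
  · simp [Set.indicator_of_notMem ht]

theorem exp_mul_LSeries_term (a : ℕ → ℝ) (hσ : σ ≠ 0) (t T : ℝ) (n : ℕ) :
    cexp (t * T * I) * LSeries.term (fun n ↦ (a n : ℂ)) (σ + t * I) n =
      (a n * (n : ℝ) ^ (-σ) : ℝ) * cexp ((t * (T - Real.log n) : ℝ) * I) := by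
  rcases Nat.eq_zero_or_pos n with rfl | hn
  · simp [Real.zero_rpow (neg_ne_zero.2 hσ)]
  have hn' : (n : ℂ) ≠ 0 := by exact_mod_cast hn.ne'
  rw [LSeries.term_of_ne_zero hn.ne', ofReal_mul, ofReal_cpow n.cast_nonneg, div_eq_mul_inv,
    ← cpow_neg, cpow_def_of_ne_zero hn', ofReal_natCast, cpow_def_of_ne_zero hn', ← natCast_log,
    mul_left_comm, ← Complex.exp_add, mul_assoc (a n : ℂ), ← Complex.exp_add]
  push_cast
  ring_nf

theorem summable_abs_mul_rpow (hσ : σ ≠ 0)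
    (ha : LSeriesSummable (fun n ↦ (a n : ℂ)) σ) :
    Summable fun n : ℕ ↦ |a n * (n : ℝ) ^ (-σ)| := by
  refine ha.norm.congr fun n ↦ ?_
  have hterm := exp_mul_LSeries_term a hσ 0 0 n
  simp only [ofReal_zero, zero_mul, Complex.exp_zero, one_mul, add_zero, mul_one] at hterm
  rw [hterm, norm_real, Real.norm_eq_abs]

theorem abs_one_sub_div_le_one {t : ℝ} (hlam : 0 < lam) (ht : t ∈ Set.Ioc 0 lam) :
    |1 - t / lam| ≤ 1 := by
  have hle : t / lam ≤ 1 := (div_le_one hlam).2 ht.2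
  have hnonneg : 0 ≤ t / lam := div_nonneg ht.1.le hlam.le
  rw [abs_le]
  constructor <;> linarith

theorem hasSum_integral_exp_mul_LSeries_term (hlam : 0 < lam) (hσ : σ ≠ 0)
    (ha : ∀ t : ℝ, LSeriesHasSum (fun n ↦ (a n : ℂ)) (σ + t * I) (G (σ + t * I))) (T : ℝ) :
    HasSum (fun n ↦ ∫ t in (0 : ℝ)..lam, ((1 - t / lam : ℝ) : ℂ) * (cexp (t * T * I) *
      LSeries.term (fun n ↦ (a n : ℂ)) (σ + t * I) n)) (fejerTransform G lam σ T) := by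
  have hsum : LSeriesSummable (fun n ↦ (a n : ℂ)) σ := by
    simpa using (ha 0).LSeriesSummable
  refine intervalIntegral.hasSum_integral_of_dominated_convergence
    (fun n _ ↦ |a n * (n : ℝ) ^ (-σ)|) (fun n ↦ ?_) (fun n ↦ .of_forall fun t ht ↦ ?_)
    (.of_forall fun t _ ↦ summable_abs_mul_rpow hσ hsum) (by simp)
    (.of_forall fun t _ ↦ ((ha t).mul_left _).mul_left _)
  · simp only [exp_mul_LSeries_term a hσ _ T n]
    exact Continuous.aestronglyMeasurable (by fun_prop)
  · rw [Set.uIoc_of_le hlam.le] at ht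
    rw [exp_mul_LSeries_term a hσ, norm_mul, norm_mul, norm_exp_ofReal_mul_I, norm_real, norm_real,
      mul_one]
    exact mul_le_of_le_one_left (abs_nonneg _) (abs_one_sub_div_le_one hlam ht)

theorem re_integral_exp_mul_LSeries_term (a : ℕ → ℝ) (hlam : 0 < lam) (hσ : σ ≠ 0) (T : ℝ) (n : ℕ) :
    (∫ t in (0 : ℝ)..lam, ((1 - t / lam : ℝ) : ℂ) * (cexp (t * T * I) *
      LSeries.term (fun n ↦ (a n : ℂ)) (σ + t * I) n)).re =
      a n * (n : ℝ) ^ (-σ) * fejerKernel lam (T - Real.log n) := by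
  simp only [exp_mul_LSeries_term a hσ]
  have hcont : Continuous fun t : ℝ ↦ ((1 - t / lam : ℝ) : ℂ) *
      ((a n * (n : ℝ) ^ (-σ) : ℝ) * cexp ((t * (T - Real.log n) : ℝ) * I)) := by
    fun_prop
  rw [← reCLM_apply, ← reCLM.intervalIntegral_comp_comm (hcont.intervalIntegrable _ _),
    ← integral_one_sub_div_mul_cos hlam, ← intervalIntegral.integral_const_mul]
  refine intervalIntegral.integral_congr fun t _ ↦ ?_
  simp only [reCLM_apply, re_ofReal_mul, exp_ofReal_mul_I_re]
  ring

theorem hasSum_mul_rpow_mul_fejerKernel (hlam : 0 < lam) (hσ : σ ≠ 0)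
    (ha : ∀ t : ℝ, LSeriesHasSum (fun n ↦ (a n : ℂ)) (σ + t * I) (G (σ + t * I))) (T : ℝ) :
    HasSum (fun n : ℕ ↦ a n * (n : ℝ) ^ (-σ) * fejerKernel lam (T - Real.log n))
      (fejerTransform G lam σ T).re := by
  simpa only [re_integral_exp_mul_LSeries_term a hlam hσ] using
    hasSum_re (hasSum_integral_exp_mul_LSeries_term hlam hσ ha T)

theorem tendsto_natCast_rpow_neg (n : ℕ) :
    Tendsto (fun σ : ℝ ↦ (n : ℝ) ^ (-σ)) (𝓝 1) (𝓝 (n : ℝ)⁻¹) := by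
  rcases eq_or_ne n 0 with rfl | hn
  · refine tendsto_const_nhds.congr' ?_
    filter_upwards [eventually_ne_nhds one_ne_zero] with σ hσ
    simp [Real.zero_rpow (neg_ne_zero.2 hσ)]
  · have hcont : Continuous fun σ : ℝ ↦ (n : ℝ) ^ (-σ) :=
      continuous_const.rpow continuous_neg fun _ ↦ .inl (by exact_mod_cast hn)
    simpa [Real.rpow_neg_one] using hcont.tendsto 1

theorem natCast_rpow_neg_le_inv (hσ : 1 ≤ σ) (n : ℕ) : (n : ℝ) ^ (-σ) ≤ (n : ℝ)⁻¹ := by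
  rcases eq_or_ne n 0 with rfl | hn
  · simp [Real.zero_rpow (by linarith : -σ ≠ 0)]
  · rw [← Real.rpow_neg_one]
    exact Real.rpow_le_rpow_of_exponent_le (by exact_mod_cast Nat.one_le_iff_ne_zero.2 hn)
      (neg_le_neg hσ)

/-- Abel summation by dominated convergence: the identity for `σ > 1` extends to the boundary. -/
theorem ChebyshevBounded.fejerSum_eq_re_fejerTransform (ha : ChebyshevBounded a) (hlam : 0 < lam)
    (hG : ContinuousOn G {s | 1 ≤ s.re})
    (haG : ∀ s : ℂ, 1 < s.re → LSeriesHasSum (fun n ↦ (a n : ℂ)) s (G s)) (T : ℝ) :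
    fejerSum a lam T = (fejerTransform G lam 1 T).re := by
  refine tendsto_nhds_unique (f := fun σ ↦ (fejerTransform G lam σ T).re) (l := 𝓝[>] 1) ?_
    ((continuous_re.tendsto _).comp (tendsto_fejerTransform_nhdsGT_one hG lam T))
  refine (tendsto_tsum_of_dominated_convergence
    (f := fun (σ : ℝ) (n : ℕ) ↦ a n * (n : ℝ) ^ (-σ) * fejerKernel lam (T - Real.log n))
    (ha.summable_abs_fejerSum hlam T) (fun n ↦ ?_) ?_).congr' ?_
  · rw [div_eq_mul_inv]
    exact (((tendsto_natCast_rpow_neg n).mono_left nhdsWithin_le_nhds).const_mul _).mul_const _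
  · filter_upwards [self_mem_nhdsWithin] with σ hσ n
    have hkernel := fejerKernel_nonneg hlam.le (T - Real.log n)
    rw [norm_mul, norm_mul, Real.norm_of_nonneg hkernel, Real.norm_eq_abs,
      Real.norm_of_nonneg (by positivity : 0 ≤ (n : ℝ) ^ (-σ)), div_eq_mul_inv]
    gcongr
    exact natCast_rpow_neg_le_inv (le_of_lt hσ) n
  · filter_upwards [self_mem_nhdsWithin] with σ hσ
    exact (hasSum_mul_rpow_mul_fejerKernel hlam (ne_of_gt (zero_lt_one.trans hσ))
      (fun t ↦ haG _ (by simpa using hσ)) T).tsum_eq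

/-- A Wiener–Ikehara-type theorem: at the boundary the Fejér sums are Fourier coefficients of a
continuous function, so that they vanish at infinity by the Riemann–Lebesgue lemma. -/
theorem ChebyshevBounded.tendsto_fejerSum (ha : ChebyshevBounded a) (hlam : 0 < lam)
    (hG : ContinuousOn G {s | 1 ≤ s.re})
    (haG : ∀ s : ℂ, 1 < s.re → LSeriesHasSum (fun n ↦ (a n : ℂ)) s (G s)) :
    Tendsto (fejerSum a lam) atTop (𝓝 0) := by
  simp only [funext (ha.fejerSum_eq_re_fejerTransform hlam hG haG)]
  exact (continuous_re.tendsto 0).comp (tendsto_fejerTransform_atTop G hlam.le 1)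

end FejerTransform

section Primes

open Complex ArithmeticFunction

theorem residueClass_zmod_one (a : ZMod 1) :
    vonMangoldt.residueClass a = fun n ↦ vonMangoldt n := by
  ext n
  rw [vonMangoldt.residueClass, Set.indicator_of_mem]
  exact Subsingleton.elim _ _

/-- The pole of the Riemann zeta function at `1` cancels that of its logarithmic derivative, and
the zeta function has no zeros on the line `re s = 1`. -/
theorem exists_continuousOn_LSeriesHasSum_vonMangoldt_sub_one :
    ∃ G : ℂ → ℂ, ContinuousOn G {s | 1 ≤ s.re} ∧
      ∀ s, 1 < s.re → LSeriesHasSum (fun n ↦ ((vonMangoldt n - 1 : ℝ) : ℂ)) s (G s) := by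
  refine ⟨fun s ↦ vonMangoldt.LFunctionResidueClassAux (1 : ZMod 1) s - riemannZeta₀ s,
    (vonMangoldt.continuousOn_LFunctionResidueClassAux _).sub
      differentiable_riemannZeta₀.continuous.continuousOn, fun s hs ↦ ?_⟩
  have hs₁ : s ≠ 1 := by rintro rfl; simp at hs
  have hLambda := vonMangoldt.eqOn_LFunctionResidueClassAux (a := (1 : ZMod 1)) isUnit_one hs
  rw [residueClass_zmod_one] at hLambda
  have hG : vonMangoldt.LFunctionResidueClassAux (1 : ZMod 1) s - riemannZeta₀ s =
      LSeries (fun n ↦ (vonMangoldt n : ℂ)) s - riemannZeta s := by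
    rw [hLambda, riemannZeta_eq_inv_sub_add hs₁]
    simp only [Nat.totient_one, Nat.cast_one, inv_one, one_div]
    ring
  beta_reduce
  rw [hG]
  convert! (LSeriesSummable_vonMangoldt hs).LSeriesHasSum.sub (LSeriesHasSum_one hs) using 1
  ext n
  simp

theorem summable_indicator_compl_primes_vonMangoldt_div :
    Summable fun n : ℕ ↦ {p : ℕ | p.Prime}ᶜ.indicator (fun n ↦ vonMangoldt n) n / n := by
  have hsum := vonMangoldt.summable_residueClass_non_primes_div (1 : ZMod 1)
  rw [residueClass_zmod_one] at hsum
  refine hsum.congr fun n ↦ ?_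
  simp only [Set.indicator_apply, Set.mem_compl_iff, Set.mem_ofPred_eq, ite_not]

theorem eventually_lt_fejerSum_primes {lam : ℝ} (hlam : 1 ≤ lam) :
    ∀ᶠ T in atTop, 1 / 64 <
      fejerSum ({p : ℕ | p.Prime}.indicator fun n ↦ vonMangoldt n) lam T := by
  have hlam₀ : 0 < lam := by linarith
  have hΛ := chebyshevBounded_vonMangoldt
  obtain ⟨G, hG, hsum⟩ := exists_continuousOn_LSeriesHasSum_vonMangoldt_sub_one
  have hdiff := (hΛ.sub chebyshevBounded_one).tendsto_fejerSum hlam₀ hG hsum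
  have hpowers := tendsto_fejerSum_of_summable summable_indicator_compl_primes_vonMangoldt_div hlam₀
  filter_upwards [hdiff.eventually_const_lt (show -(1 / 128 : ℝ) < 0 by norm_num),
    hpowers.eventually_lt_const (show (0 : ℝ) < 1 / 128 by norm_num),
    Real.tendsto_exp_atTop.eventually_ge_atTop (2 * lam)] with T hdiff hpowers hT
  rw [hΛ.fejerSum_sub chebyshevBounded_one hlam₀] at hdiff
  rw [Set.indicator_compl, hΛ.fejerSum_sub (hΛ.indicator _) hlam₀] at hpowers
  linarith [one_div_32_le_fejerSum_one hlam hT]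

theorem eventually_exists_prime_abs_sub_log_lt {δ : ℝ} (hδ : 0 < δ) :
    ∀ᶠ T in atTop, ∃ p : ℕ, p.Prime ∧ |T - Real.log p| < δ := by
  obtain ⟨B, hB⟩ := (chebyshevBounded_vonMangoldt.indicator {p | p.Prime}).exists_fejerSum_le
  have hlim : Tendsto (fun lam ↦ 2 / lam * (1 + 1 / δ ^ 2) * B) atTop (𝓝 0) := by
    simpa only [id, zero_mul] using
      ((tendsto_id.const_div_atTop 2).mul_const (1 + 1 / δ ^ 2)).mul_const B
  obtain ⟨lam, hsmall, hlam⟩ := ((hlim.eventually_lt_const (show (0 : ℝ) < 1 / 64 by norm_num)).and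
    (eventually_ge_atTop 1)).exists
  filter_upwards [eventually_lt_fejerSum_primes hlam] with T hT
  by_contra! hfar
  exact (hT.trans_le (hB (by linarith) hδ fun n hn ↦
    hfar n (Set.mem_of_indicator_ne_zero hn))).not_gt hsmall

theorem eventually_exists_prime_lt_and_lt_mul {s : ℝ} (hs : 1 < s) :
    ∀ᶠ x : ℝ in atTop, ∃ p : ℕ, p.Prime ∧ x < p ∧ p < s * x := by
  have hδ : 0 < Real.log s / 2 := half_pos (Real.log_pos hs)
  have hmid : Tendsto (fun x ↦ Real.log x + Real.log s / 2) atTop atTop :=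
    tendsto_atTop_add_const_right _ _ Real.tendsto_log_atTop
  filter_upwards [hmid.eventually (eventually_exists_prime_abs_sub_log_lt hδ),
    eventually_gt_atTop 0] with x ⟨p, hp, hlog⟩ hx
  have hp₀ : (0 : ℝ) < p := by exact_mod_cast hp.pos
  rw [abs_lt] at hlog
  refine ⟨p, hp, (Real.log_lt_log_iff hx hp₀).1 (by linarith), ?_⟩
  rw [← Real.log_lt_log_iff hp₀ (by positivity), Real.log_mul (by linarith) hx.ne']
  linarith

end Primes

section Asymptotics

theorem fC4_le_of_prime_of_rpow_le {p r : ℕ} (hp : p.Prime) (hr : (r : ℝ) ^ ((1 : ℝ) / 3) ≤ p) :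
    (fC4 r : ℝ) ≤ p + 1024 * ((p : ℝ) ^ ((2 : ℝ) / 3) + 1) := by
  have hrp : r ≤ p ^ 3 := by
    rw [one_div, Real.rpow_inv_le_iff_of_pos r.cast_nonneg p.cast_nonneg three_pos] at hr
    exact_mod_cast hr
  have ht : p ^ 2 ≤ ⌈(p : ℝ) ^ ((2 : ℝ) / 3)⌉₊ ^ 3 := by
    have : (p : ℝ) ^ 2 ≤ (⌈(p : ℝ) ^ ((2 : ℝ) / 3)⌉₊ : ℝ) ^ 3 := by
      calc (p : ℝ) ^ 2 = ((p : ℝ) ^ ((2 : ℝ) / 3)) ^ 3 := by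
            rw [← Real.rpow_mul_natCast p.cast_nonneg]
            norm_num
        _ ≤ _ := by gcongr; exact Nat.le_ceil _
    exact_mod_cast this
  calc (fC4 r : ℝ) ≤ p + 1024 * ⌈(p : ℝ) ^ ((2 : ℝ) / 3)⌉₊ := by
        exact_mod_cast fC4_le_of_prime hp hrp ht
    _ ≤ p + 1024 * ((p : ℝ) ^ ((2 : ℝ) / 3) + 1) := by
        gcongr
        exact (Nat.ceil_lt_add_one (by positivity)).le

theorem isLittleO_mul_rpow_add_one_id (C : ℝ) :
    (fun y : ℝ ↦ C * (y ^ ((2 : ℝ) / 3) + 1)) =o[atTop] id := by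
  have hrpow : (fun y : ℝ ↦ y ^ ((2 : ℝ) / 3)) =o[atTop] id := by
    refine Asymptotics.isLittleO_of_tendsto' ?_ ((tendsto_rpow_neg_atTop
      (by norm_num : (0 : ℝ) < 1 / 3)).congr' ?_)
    · filter_upwards [eventually_ne_atTop 0] with y hy hy₀ using absurd hy₀ hy
    · filter_upwards [eventually_gt_atTop 0] with y hy
      rw [id, ← Real.rpow_sub_one hy.ne']
      norm_num
  exact (hrpow.add (Asymptotics.isLittleO_const_id_atTop 1)).const_mul_left C

theorem tendsto_natCast_rpow_one_div_three_atTop :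
    Tendsto (fun r : ℕ ↦ (r : ℝ) ^ ((1 : ℝ) / 3)) atTop atTop :=
  (tendsto_rpow_atTop (by norm_num)).comp tendsto_natCast_atTop_atTop

theorem eventually_fC4_le {s : ℝ} (hs : 1 < s) :
    ∀ᶠ r : ℕ in atTop, (fC4 r : ℝ) ≤ s ^ 2 * (r : ℝ) ^ ((1 : ℝ) / 3) := by
  have herror := eventually_forall_ge_atTop.2
    ((isLittleO_mul_rpow_add_one_id 1024).bound (sub_pos.2 hs))
  filter_upwards [tendsto_natCast_rpow_one_div_three_atTop.eventually
    ((eventually_exists_prime_lt_and_lt_mul hs).and herror)] with r ⟨⟨p, hp, hrp, hpr⟩, herror⟩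
  have hsmall : 1024 * ((p : ℝ) ^ ((2 : ℝ) / 3) + 1) ≤ (s - 1) * p := by
    simpa using (le_abs_self _).trans (herror p hrp.le)
  calc (fC4 r : ℝ)
      ≤ p + 1024 * ((p : ℝ) ^ ((2 : ℝ) / 3) + 1) := fC4_le_of_prime_of_rpow_le hp hrp.le
    _ ≤ s * p := by linarith
    _ ≤ s * (s * (r : ℝ) ^ ((1 : ℝ) / 3)) := by gcongr
    _ = s ^ 2 * (r : ℝ) ^ ((1 : ℝ) / 3) := by ring

theorem rpow_one_div_three_le_fC4_add_one (r : ℕ) : (r : ℝ) ^ ((1 : ℝ) / 3) ≤ fC4 r + 1 := by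
  have hr : r ≤ (fC4 r + 1) ^ 3 := by simpa using (hasC4FreeCover_fC4 r).card_le
  rw [one_div, Real.rpow_inv_le_iff_of_pos r.cast_nonneg (by positivity) three_pos]
  exact_mod_cast hr

end Asymptotics

theorem fC4_asymptotics :
    Filter.Tendsto (fun r : ℕ => (fC4 r : ℝ) / (r : ℝ) ^ ((1 : ℝ) / 3))
      Filter.atTop (nhds 1) := by
  have hroot := tendsto_natCast_rpow_one_div_three_atTop
  have hlower : Tendsto (fun r : ℕ ↦ 1 - 1 / (r : ℝ) ^ ((1 : ℝ) / 3)) atTop (𝓝 1) := by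
    simpa using (hroot.const_div_atTop 1).const_sub 1
  refine tendsto_order.2 ⟨fun a ha ↦ ?_, fun b hb ↦ ?_⟩
  · filter_upwards [hlower.eventually_const_lt ha, hroot.eventually_gt_atTop 0] with r har hr
    refine har.trans_le ?_
    rw [one_sub_div hr.ne']
    gcongr
    linarith [rpow_one_div_three_le_fC4_add_one r]
  · obtain ⟨s, hs, hsb⟩ := exists_between (Real.lt_sqrt_of_sq_lt ((one_pow 2).trans_lt hb))
    filter_upwards [eventually_fC4_le hs, hroot.eventually_gt_atTop 0] with r hupper hr
    rw [div_lt_iff₀ hr]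
    exact hupper.trans_lt (by gcongr; exact (Real.lt_sqrt (by linarith)).1 hsb)
end

section
/- Let e ≥ 1 be an integer and q = 2^{2e+1}. The achromatic number of the polarity graph GQ_q^π equals q², and its pseudo-achromatic number also equals q². -/
/-- The pseudo-achromatic number: the largest `r` such that `G` admits a complete
partition into `r` parts. -/
noncomputable def pseudoAchromatic {V : Type*} (G : SimpleGraph V) : ℕ :=
  sSup {r : ℕ | ∃ c : V → Fin r, IsCompletePartition G c}

/-- The achromatic number: the largest `r` such that `G` admits a complete
partition into `r` independent parts. -/
noncomputable def achromatic {V : Type*} (G : SimpleGraph V) : ℕ :=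
  sSup {r : ℕ | ∃ c : V → Fin r, IsCompletePartition G c ∧
    ∀ u v : V, c u = c v → ¬ G.Adj u v}

/-- The polarity graph `GQ_q^π` of the biaffine part of the classical generalized
quadrangle, for `q = 2^(2e+1)`: vertices are triples `(p₁,p₂,p₃)` over `F_q`, with
`(p₁,p₂,p₃)` adjacent to `(r₁,r₂,r₃)` iff they are distinct and
`p₂ + r₃^(2^e) = p₁ r₁^(2^(e+1))` and `p₃ + r₂^(2^(e+1)) = p₁² r₁^(2^(e+1))`. -/
def GQPolarityGraph (e : ℕ) (F : Type*) [Field F] : SimpleGraph (F × F × F) :=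
  SimpleGraph.fromRel (fun p r =>
    p.2.1 + r.2.2 ^ (2 ^ e) = p.1 * r.1 ^ (2 ^ (e + 1)) ∧
    p.2.2 + r.2.1 ^ (2 ^ (e + 1)) = p.1 ^ 2 * r.1 ^ (2 ^ (e + 1)))

/-!
A complete partition into `r` parts needs an edge between any two of them, so `r (r - 1)` is at most
the degree sum. A neighbour of a vertex is determined by its first coordinate, so the degree sum is
at most `q³ * q = (q²)²`, which forces `r ≤ q²`. Equality is attained by the classes of vertices
with fixed first two coordinates: given two classes, the incidence equations can be solved for the
third coordinates, and two adjacent vertices in one class would have equal third coordinates.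

Since `x ^ 2 ^ (2 * e + 1) = x`, the powers `2 ^ e` and `2 ^ (e + 1)` are mutually inverse
automorphisms of the field and the square of the second one is the Frobenius map. This makes the
incidence relation symmetric.
-/

theorem IsCompletePartition.mul_pred_le_card_dart {V : Type*} [Fintype V] {G : SimpleGraph V}
    [DecidableRel G.Adj] {r : ℕ} {c : V → Fin r} (hc : IsCompletePartition G c) :
    r * (r - 1) ≤ Fintype.card G.Dart := by
  let colorPair (d : G.Dart) : Fin r × Fin r := (c d.fst, c d.snd)
  have offDiag_subset :
      (Finset.univ : Finset (Fin r)).offDiag ⊆ Finset.univ.image colorPair := by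
    rintro ⟨i, j⟩ hij
    obtain ⟨u, v, rfl, rfl, huv⟩ := hc i j (Finset.mem_offDiag.1 hij).2.2
    exact Finset.mem_image.2 ⟨⟨(u, v), huv⟩, Finset.mem_univ _, rfl⟩
  calc r * (r - 1) = (Finset.univ : Finset (Fin r)).offDiag.card := by
        rw [Finset.offDiag_card, Finset.card_fin, Nat.mul_sub_one]
    _ ≤ (Finset.univ.image colorPair).card := Finset.card_le_card offDiag_subset
    _ ≤ Fintype.card G.Dart := Finset.card_image_le

theorem IsCompletePartition.le_of_degree_le {V : Type*} [Fintype V] {G : SimpleGraph V}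
    [DecidableRel G.Adj] {r d n : ℕ} {c : V → Fin r} (hc : IsCompletePartition G c)
    (hdeg : ∀ v, G.degree v ≤ d) (hn : Fintype.card V * d < (n + 1) * n) : r ≤ n := by
  have card_dart_le : Fintype.card G.Dart ≤ Fintype.card V * d := by
    rw [G.dart_card_eq_sum_degrees]
    exact Finset.sum_le_card_nsmul _ _ _ fun v _ => hdeg v
  by_contra! hr
  have : (n + 1) * n ≤ r * (r - 1) := Nat.mul_le_mul hr (Nat.le_sub_one_of_lt hr)
  have := hc.mul_pred_le_card_dart
  lia

section TwoPowers

variable {M : Type*} [Monoid M] {e : ℕ} {x : M}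

theorem pow_two_pow_succ_pow_two_pow (hx : x ^ 2 ^ (2 * e + 1) = x) :
    (x ^ 2 ^ (e + 1)) ^ 2 ^ e = x := by
  rw [← pow_mul, ← pow_add, show e + 1 + e = 2 * e + 1 by ring, hx]

theorem pow_two_pow_succ_pow_two_pow_succ (hx : x ^ 2 ^ (2 * e + 1) = x) :
    (x ^ 2 ^ (e + 1)) ^ 2 ^ (e + 1) = x ^ 2 := by
  rw [pow_succ 2 e, pow_mul _ (2 ^ e), ← pow_succ 2 e, pow_two_pow_succ_pow_two_pow hx]

end TwoPowers

theorem charP_two_of_forall_pow_two_pow_succ_eq_self {R : Type*} [Ring R] [Nontrivial R] {n : ℕ}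
    (hR : ∀ x : R, x ^ 2 ^ (n + 1) = x) : CharP R 2 := by
  have neg_one_eq_one : (-1 : R) = 1 := by
    rw [← hR (-1), pow_succ', pow_mul, neg_one_sq, one_pow]
  refine CharTwo.of_one_ne_zero_of_two_eq_zero one_ne_zero ?_
  rw [← one_add_one_eq_two, ← neg_eq_iff_add_eq_zero, neg_one_eq_one]

/-- Incidence of the point `p` with the image of the point `r` under the polarity. Unlike adjacency
in `GQPolarityGraph`, it can hold for `p = r` (the absolute points of the polarity). -/
def GQIncident {R : Type*} [CommRing R] (e : ℕ) (p r : R × R × R) : Prop :=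
  p.2.1 + r.2.2 ^ 2 ^ e = p.1 * r.1 ^ 2 ^ (e + 1) ∧
    p.2.2 + r.2.1 ^ 2 ^ (e + 1) = p.1 ^ 2 * r.1 ^ 2 ^ (e + 1)

namespace GQIncident

variable {R : Type*} [CommRing R] {e : ℕ} {p r s : R × R × R}

-- Each equation, raised to the power inverse to the one it contains, is the other one with
-- `p` and `r` exchanged.
theorem symm (hR : ∀ x : R, x ^ 2 ^ (2 * e + 1) = x) (h : GQIncident e p r) :
    GQIncident e r p := by
  nontriviality R using GQIncident
  have : CharP R 2 := charP_two_of_forall_pow_two_pow_succ_eq_self hR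
  obtain ⟨h₁, h₂⟩ := h
  constructor
  · calc r.2.1 + p.2.2 ^ 2 ^ e = (p.2.2 + r.2.1 ^ 2 ^ (e + 1)) ^ 2 ^ e := by
          rw [add_pow_char_pow, pow_two_pow_succ_pow_two_pow (hR _), add_comm]
      _ = (p.1 ^ 2 * r.1 ^ 2 ^ (e + 1)) ^ 2 ^ e := by rw [h₂]
      _ = r.1 * p.1 ^ 2 ^ (e + 1) := by
          rw [mul_pow, pow_two_pow_succ_pow_two_pow (hR _), ← pow_mul, ← pow_succ', mul_comm]
  · calc r.2.2 + p.2.1 ^ 2 ^ (e + 1) = (p.2.1 + r.2.2 ^ 2 ^ e) ^ 2 ^ (e + 1) := by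
          rw [add_pow_char_pow, pow_right_comm, pow_two_pow_succ_pow_two_pow (hR _), add_comm]
      _ = (p.1 * r.1 ^ 2 ^ (e + 1)) ^ 2 ^ (e + 1) := by rw [h₁]
      _ = r.1 ^ 2 * p.1 ^ 2 ^ (e + 1) := by
          rw [mul_pow, pow_two_pow_succ_pow_two_pow_succ (hR _), mul_comm]

theorem eq_of_fst_eq (hp : GQIncident e p s) (hr : GQIncident e r s) (hfst : p.1 = r.1) :
    p = r := by
  obtain ⟨hp₁, hp₂⟩ := hp
  obtain ⟨hr₁, hr₂⟩ := hr
  rw [hfst] at hp₁ hp₂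
  exact Prod.ext hfst
    (Prod.ext (add_right_cancel (hp₁.trans hr₁.symm)) (add_right_cancel (hp₂.trans hr₂.symm)))

theorem eq_of_fst_eq_of_snd_fst_eq (hR : ∀ x : R, x ^ 2 ^ (2 * e + 1) = x)
    (h : GQIncident e p r) (hfst : p.1 = r.1) (hsnd : p.2.1 = r.2.1) : p = r := by
  have hpr := h.2
  have hrp := (h.symm hR).2
  rw [hfst] at hpr hrp
  rw [hsnd] at hrp
  exact Prod.ext hfst (Prod.ext hsnd (add_right_cancel (hpr.trans hrp.symm)))

theorem exists_third_coordinates (hR : ∀ x : R, x ^ 2 ^ (2 * e + 1) = x) (a b a' b' : R) :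
    ∃ t t' : R, GQIncident e (a, b, t) (a', b', t') := by
  refine ⟨a ^ 2 * a' ^ 2 ^ (e + 1) - b' ^ 2 ^ (e + 1), (a * a' ^ 2 ^ (e + 1) - b) ^ 2 ^ (e + 1),
    ?_, sub_add_cancel _ _⟩
  rw [pow_two_pow_succ_pow_two_pow (hR _), add_sub_cancel]

end GQIncident

namespace GQPolarityGraph

variable {F : Type*} [Field F] {e : ℕ}

theorem adj_iff (hF : ∀ x : F, x ^ 2 ^ (2 * e + 1) = x) {p r : F × F × F} :
    (GQPolarityGraph e F).Adj p r ↔ p ≠ r ∧ GQIncident e p r :=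
  (SimpleGraph.fromRel_adj _ p r).trans <| and_congr_right fun _ =>
    or_iff_left_of_imp (GQIncident.symm hF)

theorem degree_le_card [Fintype F] (hF : ∀ x : F, x ^ 2 ^ (2 * e + 1) = x) (p : F × F × F)
    [Fintype ((GQPolarityGraph e F).neighborSet p)] :
    (GQPolarityGraph e F).degree p ≤ Fintype.card F := by
  have incident {r} (hr : r ∈ (GQPolarityGraph e F).neighborFinset p) : GQIncident e r p :=
    ((adj_iff hF).1 ((SimpleGraph.mem_neighborFinset _ _ _).1 hr)).2.symm hF
  exact Finset.card_le_card_of_injOn Prod.fst (fun _ _ => Finset.mem_univ _)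
    fun r hr s hs => (incident hr).eq_of_fst_eq (incident hs)

theorem le_card_sq_of_isCompletePartition [Fintype F] (hF : ∀ x : F, x ^ 2 ^ (2 * e + 1) = x)
    {r : ℕ} {c : F × F × F → Fin r} (hc : IsCompletePartition (GQPolarityGraph e F) c) :
    r ≤ Fintype.card F ^ 2 := by
  classical
  refine hc.le_of_degree_le (fun p => degree_le_card hF p) ?_
  rw [Fintype.card_prod, Fintype.card_prod]
  have : 0 < Fintype.card F := Fintype.card_pos
  calc Fintype.card F * (Fintype.card F * Fintype.card F) * Fintype.card F
      = Fintype.card F ^ 2 * Fintype.card F ^ 2 := by ring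
    _ < (Fintype.card F ^ 2 + 1) * Fintype.card F ^ 2 := by gcongr; exact Nat.lt_succ_self _

theorem exists_isCompletePartition_card_sq [Fintype F]
    (hF : ∀ x : F, x ^ 2 ^ (2 * e + 1) = x) :
    ∃ c : F × F × F → Fin (Fintype.card F ^ 2), IsCompletePartition (GQPolarityGraph e F) c ∧
      ∀ u v, c u = c v → ¬ (GQPolarityGraph e F).Adj u v := by
  let label : F × F ≃ Fin (Fintype.card F ^ 2) :=
    Fintype.equivFinOfCardEq (by rw [Fintype.card_prod, sq])
  refine ⟨fun p => label (p.1, p.2.1), ?complete, ?independent⟩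
  case complete =>
    intro i j hij
    obtain ⟨⟨a, b⟩, rfl⟩ := label.surjective i
    obtain ⟨⟨a', b'⟩, rfl⟩ := label.surjective j
    obtain ⟨t, t', hinc⟩ := GQIncident.exists_third_coordinates hF a b a' b'
    refine ⟨(a, b, t), (a', b', t'), rfl, rfl, (adj_iff hF).2 ⟨fun heq => hij ?_, hinc⟩⟩
    exact congrArg (fun p : F × F × F => label (p.1, p.2.1)) heq
  case independent =>
    intro u v huv hadj
    obtain ⟨hne, hinc⟩ := (adj_iff hF).1 hadj
    obtain ⟨hfst, hsnd⟩ := Prod.mk.inj (label.injective huv)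
    exact hne (hinc.eq_of_fst_eq_of_snd_fst_eq hF hfst hsnd)

end GQPolarityGraph

theorem achromatic_and_pseudoAchromatic_GQPolarityGraph_general
    (e : ℕ) (F : Type*) [Field F] [Fintype F] (hF : ∀ x : F, x ^ 2 ^ (2 * e + 1) = x) :
    achromatic (GQPolarityGraph e F) = Fintype.card F ^ 2 ∧
    pseudoAchromatic (GQPolarityGraph e F) = Fintype.card F ^ 2 := by
  obtain ⟨c, hcomplete, hindep⟩ := GQPolarityGraph.exists_isCompletePartition_card_sq hF
  constructor
  · exact IsGreatest.csSup_eq ⟨⟨c, hcomplete, hindep⟩, fun _ ⟨_, hc, _⟩ =>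
      GQPolarityGraph.le_card_sq_of_isCompletePartition hF hc⟩
  · exact IsGreatest.csSup_eq ⟨⟨c, hcomplete⟩, fun _ ⟨_, hc⟩ =>
      GQPolarityGraph.le_card_sq_of_isCompletePartition hF hc⟩

theorem achromatic_and_pseudoAchromatic_GQPolarityGraph
    (e : ℕ) (he : 1 ≤ e) (q : ℕ) (hq : q = 2 ^ (2 * e + 1))
    (F : Type*) [Field F] [Fintype F] (hF : Fintype.card F = q) :
    achromatic (GQPolarityGraph e F) = q ^ 2 ∧
    pseudoAchromatic (GQPolarityGraph e F) = q ^ 2 :=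
  hF ▸ achromatic_and_pseudoAchromatic_GQPolarityGraph_general e F fun x => by
    rw [← hq, ← hF, FiniteField.pow_card]
end
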